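/- arXiv:1901.09898 — 5 statements merged into one kernel-verified Lean document; each statement's English description precedes it below -/
import Mathlib

section
/- Let {H_iα_i}_{i=1}^{s} be a coset partition of F_n (n ≥ 1) with indices 1 < d_1 ≤ … ≤ d_s, and let h_i be the period of the transition matrix A_i of H_i. Suppose h_k = max{h_i : 1 ≤ i ≤ s} and h_k > 1. Then there exists j ≠ k such that h_j = h_k; that is, the maximal period is attained at least twice. -/
/-!
Let `h` be the maximal period, `ζ` a primitive `h`-th root of unity, and `χ : F_n → ℂˣ` the
character sending every generator to `ζ`. Paths in the Schreier graph of `H` are positive words,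
so a closed path of length `m` at `H` gives an element of `H` on which `χ` takes the value `ζ ^ m`.
Hence `χ` is trivial on `H_k` (`periodChar_eq_one`; inverses of generators are first replaced by
positive powers, which is possible modulo a subgroup of finite index), while `χ` trivial on `H_i`
forces `h ∣ h_i` (`dvd_schreierPeriod`), and then `h_i = h` by maximality.

Sum `χ` over the finite quotient `F_n ⧸ K`, where `K` is the intersection of the normal cores of
the `H_i`. The total is zero since `χ` is nontrivial. The part of the sum over the coset `H_i α_i`
vanishes whenever `χ` is nontrivial on `H_i`, by translation invariance. If `k` were the only index
with period `h`, only the part over `H_k α_k` would survive; it is a positive multiple of `χ (α_k)`,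
hence nonzero, a contradiction.
-/

attribute [local instance] Classical.propDecidable

noncomputable section

/-- The set of right cosets `Hg` of a subgroup `H` of `G`. -/
abbrev RightCosets {G : Type*} [Group G] (H : Subgroup G) : Type _ :=
  Quotient (QuotientGroup.rightRel H)

/-- The right coset `Hg`, as an element of the right coset space. -/
def rcoset {G : Type*} [Group G] (H : Subgroup G) (g : G) : RightCosets H :=
  Quotient.mk'' g

/-- Right multiplication by `a` descends to the right coset space. -/
def cosetMul {G : Type*} [Group G] (H : Subgroup G) (a : G) :
    RightCosets H → RightCosets H :=
  Quotient.map' (· * a) (fun x y hxy => by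
    rw [QuotientGroup.rightRel_apply] at hxy ⊢
    simpa [mul_inv_rev, mul_assoc] using hxy)

noncomputable instance rightCosetsFintype {G : Type*} [Group G] (H : Subgroup G)
    [H.FiniteIndex] : Fintype (RightCosets H) :=
  have : Finite (G ⧸ H) := H.finite_quotient_of_finiteIndex
  have : Finite (RightCosets H) :=
    Finite.of_equiv _ (QuotientGroup.quotientRightRelEquivQuotientLeftRel H).symm
  Fintype.ofFinite _

/-- The transition matrix of the Schreier graph of a subgroup `H` of the free group `F_n`:
rows and columns are indexed by the right cosets of `H`, and the `(x, y)` entry is the number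
of generators `a_i` with `x · a_i = y`. -/
def schreierMatrix {n : ℕ} (H : Subgroup (FreeGroup (Fin n))) :
    Matrix (RightCosets H) (RightCosets H) ℕ :=
  Matrix.of fun x y => Nat.card {i : Fin n // cosetMul H (FreeGroup.of i) x = y}

/-- The gcd of a set of natural numbers: the natural generator of the ideal of `ℤ`
generated by the set. -/
def setGcd (S : Set ℕ) : ℕ :=
  (Submodule.IsPrincipal.generator (Ideal.span ((fun m : ℕ => (m : ℤ)) '' S))).natAbs

/-- The period of the transition matrix of the Schreier graph of `H`: the gcd of all `m ≥ 1`
such that the `(H, H)` entry of `A ^ m` is positive. -/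
def schreierPeriod {n : ℕ} (H : Subgroup (FreeGroup (Fin n))) [H.FiniteIndex] : ℕ :=
  setGcd {m : ℕ | 1 ≤ m ∧ 0 < (schreierMatrix H ^ m) (rcoset H 1) (rcoset H 1)}

/-- The right coset `Hg`, as a subset of `G`. -/
def rightCosetSet {G : Type*} [Group G] (H : Subgroup G) (g : G) : Set G :=
  {x : G | x * g⁻¹ ∈ H}

/-- `{H_i α_i}` is a coset partition: the right cosets `H_i α_i` are pairwise disjoint and
their union is the whole group. -/
def IsCosetPartition {G : Type*} [Group G] {ι : Type*}
    (H : ι → Subgroup G) (α : ι → G) : Prop :=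
  (∀ x : G, ∃ i, x ∈ rightCosetSet (H i) (α i)) ∧
    Pairwise fun i j => Disjoint (rightCosetSet (H i) (α i)) (rightCosetSet (H j) (α j))

/-- The element of the free group associated to a positive word `w` of length `k`. -/
def wordProd {n k : ℕ} (w : Fin k → Fin n) : FreeGroup (Fin n) :=
  (List.ofFn fun j => FreeGroup.of (w j)).prod

/-- The number of positive words of length `k` whose associated element lies in `Hα`. -/
def cosetCount {n : ℕ} (H : Subgroup (FreeGroup (Fin n))) (α : FreeGroup (Fin n))
    (k : ℕ) : ℕ :=
  Nat.card {w : Fin k → Fin n // wordProd w ∈ rightCosetSet H α}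

/-- The generating function of the coset `Hα`. -/
def genFun {n : ℕ} (H : Subgroup (FreeGroup (Fin n))) (α : FreeGroup (Fin n)) (z : ℂ) : ℂ :=
  ∑' k : ℕ, (cosetCount H α k : ℂ) * z ^ k

end

noncomputable section

/-- The transition matrix, regarded as a complex matrix. -/
def schreierMatrixC {n : ℕ} (H : Subgroup (FreeGroup (Fin n))) :
    Matrix (RightCosets H) (RightCosets H) ℂ :=
  (schreierMatrix H).map (Nat.cast : ℕ → ℂ)

/-- The polynomial `q(z) = det (I - z A) ∈ ℂ[z]`, for `A` the transition matrix of `H`. -/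
def detPoly {n : ℕ} (H : Subgroup (FreeGroup (Fin n))) [H.FiniteIndex] : Polynomial ℂ :=
  Matrix.det
    ((1 : Matrix (RightCosets H) (RightCosets H) (Polynomial ℂ)) -
      (Polynomial.X : Polynomial ℂ) • (schreierMatrix H).map (fun m : ℕ => (Polynomial.C (m : ℂ))))

/-- The power series `f_{xy}(z) = ∑_k (A^k)(x,y) z^k`. -/
def pathSeries {n : ℕ} (H : Subgroup (FreeGroup (Fin n))) [H.FiniteIndex]
    (x y : RightCosets H) (z : ℂ) : ℂ :=
  ∑' k : ℕ, (((schreierMatrix H ^ k) x y : ℕ) : ℂ) * z ^ k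

/-- The residue class `dℤ + r`, as a subset of `ℤ`. -/
def residueClass (d : ℕ) (r : ℤ) : Set ℤ :=
  {x : ℤ | (d : ℤ) ∣ x - r}

end

lemma rcoset_eq_iff {G : Type*} [Group G] (H : Subgroup G) (x y : G) :
    rcoset H x = rcoset H y ↔ y * x⁻¹ ∈ H := by
  unfold rcoset
  rw [Quotient.eq'', QuotientGroup.rightRel_apply]

lemma cosetMul_rcoset {G : Type*} [Group G] (H : Subgroup G) (a x : G) :
    cosetMul H a (rcoset H x) = rcoset H (x * a) := rfl

/-- Entries of powers of the transition matrix detect positive words of the given length. -/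
lemma schreierMatrix_pow_pos {n : ℕ} (H : Subgroup (FreeGroup (Fin n))) [H.FiniteIndex]
    (m : ℕ) (x : FreeGroup (Fin n)) (y : RightCosets H) :
    0 < (schreierMatrix H ^ m) (rcoset H x) y ↔
      ∃ l : List (Fin n), l.length = m ∧ rcoset H (x * (l.map FreeGroup.of).prod) = y := by
  induction m generalizing x with
  | zero =>
    simp only [pow_zero, Matrix.one_apply, List.length_eq_zero_iff]
    split_ifs with h <;> simp [h]
  | succ m ih =>
    rw [pow_succ', Matrix.mul_apply, Finset.sum_pos_iff]
    constructor
    · rintro ⟨z, -, hz⟩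
      obtain ⟨h1, h2⟩ := CanonicallyOrderedAdd.mul_pos.1 hz
      have h1' : 0 < Nat.card {i : Fin n // cosetMul H (FreeGroup.of i) (rcoset H x) = z} := h1
      obtain ⟨⟨i, hi⟩⟩ := (Nat.card_pos_iff.1 h1').1
      rw [cosetMul_rcoset] at hi
      rw [← hi, ih] at h2
      obtain ⟨l, hl, hy⟩ := h2
      exact ⟨i :: l, by simp [hl], by simpa [mul_assoc] using hy⟩
    · rintro ⟨l, hl, hy⟩
      cases l with
      | nil => simp at hl
      | cons i l =>
        refine ⟨rcoset H (x * FreeGroup.of i), Finset.mem_univ _, Nat.mul_pos ?_ ?_⟩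
        · change 0 < Nat.card {j : Fin n // cosetMul H (FreeGroup.of j) (rcoset H x) = _}
          exact Nat.card_pos_iff.2 ⟨⟨⟨i, cosetMul_rcoset H _ _⟩⟩, inferInstance⟩
        · rw [ih]
          exact ⟨l, by simpa using hl, by simpa [mul_assoc] using hy⟩

lemma schreierMatrix_loop_iff {n : ℕ} (H : Subgroup (FreeGroup (Fin n))) [H.FiniteIndex] (m : ℕ) :
    0 < (schreierMatrix H ^ m) (rcoset H 1) (rcoset H 1) ↔
      ∃ l : List (Fin n), l.length = m ∧ (l.map FreeGroup.of).prod ∈ H := by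
  rw [schreierMatrix_pow_pos]
  simp [rcoset_eq_iff]

lemma setGcd_dvd {S : Set ℕ} {m : ℕ} (hm : m ∈ S) : setGcd S ∣ m := by
  have h : (m : ℤ) ∈ Ideal.span ((fun m : ℕ => (m : ℤ)) '' S) :=
    Ideal.subset_span ⟨m, hm, rfl⟩
  have h2 := (Submodule.IsPrincipal.mem_iff_generator_dvd _).1 h
  exact Int.natAbs_dvd_natAbs.2 h2

lemma dvd_setGcd {S : Set ℕ} {c : ℕ} (hc : ∀ m ∈ S, c ∣ m) : c ∣ setGcd S := by
  have hle : Ideal.span ((fun m : ℕ => (m : ℤ)) '' S) ≤ Ideal.span {(c : ℤ)} := by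
    rw [Ideal.span_le]
    rintro _ ⟨m, hm, rfl⟩
    exact Ideal.mem_span_singleton.2 (Int.natCast_dvd_natCast.2 (hc m hm))
  have := Ideal.mem_span_singleton.1 (hle (Submodule.IsPrincipal.generator_mem _))
  exact Int.natCast_dvd.1 this

/-- The character of the free group sending every generator to `ζ`. -/
noncomputable def periodChar (n : ℕ) (ζ : ℂˣ) : FreeGroup (Fin n) →* ℂˣ :=
  FreeGroup.lift fun _ => ζ

lemma periodChar_word {n : ℕ} (ζ : ℂˣ) (l : List (Fin n)) :
    periodChar n ζ (l.map FreeGroup.of).prod = ζ ^ l.length := by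
  induction l with
  | nil => simp
  | cons i l ih =>
    have hi : periodChar n ζ (FreeGroup.of i) = ζ := by simp [periodChar]
    rw [List.map_cons, List.prod_cons, map_mul, ih, hi, List.length_cons, pow_succ']

lemma schreierPeriod_dvd_length {n : ℕ} (H : Subgroup (FreeGroup (Fin n))) [H.FiniteIndex]
    (l : List (Fin n)) (hl : (l.map FreeGroup.of).prod ∈ H) : schreierPeriod H ∣ l.length := by
  rcases Nat.eq_zero_or_pos l.length with h0 | h0
  · simp [h0]
  · exact setGcd_dvd ⟨h0, (schreierMatrix_loop_iff H _).2 ⟨l, rfl, hl⟩⟩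

/-- A positive exponent that sends every element of the free group into `H`. -/
lemma exists_pow_mem {n : ℕ} (H : Subgroup (FreeGroup (Fin n))) [H.FiniteIndex] :
    ∃ M : ℕ, 0 < M ∧ ∀ g : FreeGroup (Fin n), g ^ M ∈ H.normalCore :=
  ⟨H.normalCore.index, Nat.pos_of_ne_zero Subgroup.FiniteIndex.index_ne_zero,
    fun g => H.normalCore.pow_index_mem g⟩

lemma schreierPeriod_pos {n : ℕ} (hn : 1 ≤ n) (H : Subgroup (FreeGroup (Fin n)))
    [H.FiniteIndex] : 0 < schreierPeriod H := by
  obtain ⟨M, hM, hpow⟩ := exists_pow_mem H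
  have h := schreierPeriod_dvd_length H (List.replicate M ⟨0, hn⟩)
    (by simpa using H.normalCore_le (hpow _))
  rw [List.length_replicate] at h
  exact Nat.pos_of_dvd_of_pos h hM

/-- A homomorphism under which every generator has finite order takes all its values on positive
words. -/
lemma exists_positive_word {n : ℕ} {Q : Type*} [Group Q] (φ : FreeGroup (Fin n) →* Q) (M : ℕ)
    (hM : 0 < M) (hφ : ∀ i, φ (FreeGroup.of i) ^ M = 1) (g : FreeGroup (Fin n)) :
    ∃ l : List (Fin n), φ (l.map FreeGroup.of).prod = φ g := by
  induction g using FreeGroup.induction_on with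
  | C1 => exact ⟨[], by simp⟩
  | of i => exact ⟨[i], by simp⟩
  | inv_of i _ =>
    refine ⟨List.replicate (M - 1) i, ?_⟩
    simp only [List.map_replicate, List.prod_replicate, map_pow, map_inv]
    rw [eq_inv_iff_mul_eq_one, ← pow_succ, Nat.sub_add_cancel hM, hφ]
  | mul x y hx hy =>
    obtain ⟨l, hl⟩ := hx
    obtain ⟨l', hl'⟩ := hy
    exact ⟨l ++ l', by simp only [List.map_append, List.prod_append, map_mul, hl, hl']⟩

/-- Modulo the normal core of `H`, and without changing the value of the character, an element of
`H` is a positive word; its length is then a multiple of the period. -/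
lemma periodChar_eq_one {n : ℕ} (H : Subgroup (FreeGroup (Fin n))) [H.FiniteIndex]
    (ζ : ℂˣ) (hζ : ζ ^ schreierPeriod H = 1) (g : FreeGroup (Fin n)) (hg : g ∈ H) :
    periodChar n ζ g = 1 := by
  have key : ∀ l : List (Fin n), (l.map FreeGroup.of).prod ∈ H → ζ ^ l.length = 1 := by
    intro l hl
    obtain ⟨c, hc⟩ := schreierPeriod_dvd_length H l hl
    rw [hc, pow_mul, hζ, one_pow]
  obtain ⟨M, hM, hpow⟩ := exists_pow_mem H
  obtain ⟨l, hl⟩ := exists_positive_word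
    ((QuotientGroup.mk' H.normalCore).prod (periodChar n ζ)) M hM (fun i => by
      refine Prod.ext ?_ ?_
      · exact (QuotientGroup.eq_one_iff _).2 (hpow (FreeGroup.of i))
      · have := key (List.replicate M i) (by simpa using H.normalCore_le (hpow _))
        simpa [periodChar] using this) g
  have h1 := congrArg Prod.fst hl
  have h2 : periodChar n ζ _ = periodChar n ζ g := congrArg Prod.snd hl
  rw [← h2, periodChar_word]
  apply key
  have h3 := H.normalCore_le (QuotientGroup.eq.1 h1)
  have h4 := H.mul_mem hg (H.inv_mem h3)
  simpa using h4

lemma dvd_schreierPeriod {n : ℕ} (H : Subgroup (FreeGroup (Fin n))) [H.FiniteIndex]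
    (ζ : ℂˣ) (h : ∀ g ∈ H, periodChar n ζ g = 1) : orderOf ζ ∣ schreierPeriod H := by
  apply dvd_setGcd
  rintro m ⟨-, hm⟩
  obtain ⟨l, rfl, hl⟩ := (schreierMatrix_loop_iff H m).1 hm
  rw [orderOf_dvd_iff_pow_eq_one, ← periodChar_word]
  exact h _ hl

/-- Translation invariance of the sum over `G ⧸ K` of a `K`-invariant function on `G`. -/
lemma sum_out_translate {G : Type*} [Group G] (K : Subgroup G) [K.Normal] [Fintype (G ⧸ K)]
    (f : G → ℂ) (hf : ∀ g, ∀ c ∈ K, f (g * c) = f g) (x : G) :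
    ∑ q : G ⧸ K, f (x * q.out) = ∑ q : G ⧸ K, f q.out := by
  rw [← Equiv.sum_comp (Equiv.mulLeft (x : G ⧸ K)) (fun q : G ⧸ K => f q.out)]
  refine Finset.sum_congr rfl fun q _ => ?_
  have h : (((x : G ⧸ K) * q).out : G ⧸ K) = ((x * q.out : G) : G ⧸ K) := by
    simp
  have h2 := QuotientGroup.eq.1 h
  have h3 := hf ((x : G ⧸ K) * q).out _ h2
  rw [mul_inv_cancel_left] at h3
  exact h3

lemma mul_eq_right_or_zero {c S : ℂ} (h : c * S = S) : c = 1 ∨ S = 0 :=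
  mul_left_eq_self₀.1 h

/-- **Theorem (repetition of the maximal period).** If `{H_i α_i}` is a coset partition of the
free group `F_n` with indices `1 < d_1 ≤ … ≤ d_s`, and the period `h_k` of the transition
matrix of `H_k` is maximal among all the periods and `h_k > 1`, then there is `j ≠ k` with
`h_j = h_k`. -/
theorem maximal_period_repeats (n s : ℕ) (hn : 1 ≤ n)
    (H : Fin s → Subgroup (FreeGroup (Fin n))) (α : Fin s → FreeGroup (Fin n))
    [inst : ∀ i, (H i).FiniteIndex]
    (d : Fin s → ℕ) (hindex : ∀ i, (H i).index = d i)
    (hd1 : ∀ i, 1 < d i) (hmono : Monotone d)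
    (hpart : IsCosetPartition H α)
    (k : Fin s)
    (hmax : ∀ i, schreierPeriod (H i) ≤ schreierPeriod (H k))
    (hk1 : 1 < schreierPeriod (H k)) :
    ∃ j, j ≠ k ∧ schreierPeriod (H j) = schreierPeriod (H k) := by
  by_contra! hcon
  obtain ⟨ζ, hord⟩ : ∃ ζ : ℂˣ, orderOf ζ = schreierPeriod (H k) := by
    have hp := Complex.isPrimitiveRoot_exp (schreierPeriod (H k)) (by omega)
    obtain ⟨ζ, hζ⟩ := hp.isUnit (by omega)
    refine ⟨ζ, ?_⟩
    rw [← orderOf_units, hζ]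
    exact hp.eq_orderOf.symm
  set χ := periodChar n ζ with hχ
  have htriv : ∀ g ∈ H k, χ g = 1 :=
    periodChar_eq_one (H k) ζ (by rw [← hord, pow_orderOf_eq_one])
  have hnontriv : ∀ i, i ≠ k → ∃ x ∈ H i, χ x ≠ 1 := by
    intro i hi
    by_contra! h
    have h1 := dvd_schreierPeriod (H i) ζ h
    rw [hord] at h1
    exact hcon i hi (le_antisymm (hmax i) (Nat.le_of_dvd (schreierPeriod_pos hn _) h1))
  let K : Subgroup (FreeGroup (Fin n)) := ⨅ i, (H i).normalCore
  have hKn : K.Normal := Subgroup.normal_iInf_normal fun i => inferInstance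
  have hKf : K.FiniteIndex := Subgroup.finiteIndex_iInf fun i => inferInstance
  have hKH : ∀ i, K ≤ H i := fun i => (iInf_le _ i).trans (H i).normalCore_le
  have : Fintype (FreeGroup (Fin n) ⧸ K) := K.fintypeQuotientOfFiniteIndex
  have hχK : ∀ g, ∀ c ∈ K, χ (g * c) = χ g := fun g c hc => by
    rw [map_mul, htriv c (hKH k hc), mul_one]
  have hmemK : ∀ i g, ∀ c ∈ K,
      (g * c ∈ rightCosetSet (H i) (α i) ↔ g ∈ rightCosetSet (H i) (α i)) := by
    intro i g c hc
    have hc' : α i * c * (α i)⁻¹ ∈ H i := hKH i (hKn.conj_mem c hc _)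
    have : g * c * (α i)⁻¹ = g * (α i)⁻¹ * (α i * c * (α i)⁻¹) := by group
    change g * c * (α i)⁻¹ ∈ H i ↔ g * (α i)⁻¹ ∈ H i
    rw [this, (H i).mul_mem_cancel_right hc']
  let f : Fin s → FreeGroup (Fin n) → ℂ :=
    fun i g => if g ∈ rightCosetSet (H i) (α i) then (χ g : ℂ) else 0
  have hfsum : ∀ g, ∑ i, f i g = (χ g : ℂ) := by
    intro g
    obtain ⟨i, hi⟩ := hpart.1 g
    rw [Finset.sum_eq_single i]
    · simp [f, hi]
    · intro j _ hj
      have : g ∉ rightCosetSet (H j) (α j) := fun h =>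
        Set.disjoint_left.1 (hpart.2 hj) h hi
      simp [f, this]
    · simp
  have htotal : ∑ q : FreeGroup (Fin n) ⧸ K, (χ q.out : ℂ) = 0 := by
    have h := sum_out_translate K (fun g => (χ g : ℂ)) (fun g c hc => by simp only [hχK g c hc])
      (FreeGroup.of ⟨0, hn⟩)
    have hgen : χ (FreeGroup.of ⟨0, hn⟩) = ζ := by simp [hχ, periodChar]
    simp only [map_mul, hgen, Units.val_mul, ← Finset.mul_sum] at h
    refine (mul_eq_right_or_zero h).resolve_left fun h1 => ?_
    rw [Units.val_eq_one] at h1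
    rw [h1, orderOf_one] at hord
    omega
  have hzero : ∀ i, i ≠ k → ∑ q : FreeGroup (Fin n) ⧸ K, f i q.out = 0 := by
    intro i hi
    obtain ⟨x, hx, hx1⟩ := hnontriv i hi
    have h := sum_out_translate K (f i)
      (fun g c hc => by simp only [f, hmemK i g c hc, hχK g c hc]) x
    have hmul : ∀ g, f i (x * g) = χ x * f i g := by
      intro g
      have : x * g ∈ rightCosetSet (H i) (α i) ↔ g ∈ rightCosetSet (H i) (α i) := by
        change x * g * (α i)⁻¹ ∈ H i ↔ g * (α i)⁻¹ ∈ H i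
        rw [mul_assoc, (H i).mul_mem_cancel_left hx]
      simp only [f, this, map_mul, Units.val_mul, mul_ite, mul_zero]
    simp only [hmul, ← Finset.mul_sum] at h
    refine (mul_eq_right_or_zero h).resolve_left fun h1 => hx1 ?_
    rwa [Units.val_eq_one] at h1
  have hksum : ∑ q : FreeGroup (Fin n) ⧸ K, f k q.out = 0 := by
    rw [← htotal]
    simp only [← hfsum]
    rw [Finset.sum_comm, Finset.sum_eq_single k (fun i _ hi => hzero i hi) (by simp)]
  -- On the coset `H_k α_k` the character is constant.
  have hfk : ∀ g, f k g = if g ∈ rightCosetSet (H k) (α k) then (χ (α k) : ℂ) else 0 := by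
    intro g
    by_cases hg : g ∈ rightCosetSet (H k) (α k)
    · have h1 := htriv _ hg
      rw [map_mul, map_inv, mul_inv_eq_one] at h1
      simp only [f, h1]
    · simp only [f, hg, if_false]
  simp only [hfk] at hksum
  rw [← Finset.sum_filter, Finset.sum_const, nsmul_eq_mul, mul_eq_zero] at hksum
  have hcard := hksum.resolve_right (Units.ne_zero _)
  rw [Nat.cast_eq_zero, Finset.card_eq_zero] at hcard
  have hmem : ((α k : FreeGroup (Fin n) ⧸ K)) ∈ Finset.univ.filter
      (fun q : FreeGroup (Fin n) ⧸ K => q.out ∈ rightCosetSet (H k) (α k)) := by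
    refine Finset.mem_filter.2 ⟨Finset.mem_univ _, ?_⟩
    have h : ((α k : FreeGroup (Fin n) ⧸ K)) = ((α k : FreeGroup (Fin n) ⧸ K).out :) := by simp
    have h2 := hmemK k (α k) _ (QuotientGroup.eq.1 h)
    rw [mul_inv_cancel_left] at h2
    rw [h2]
    simp [rightCosetSet]
  rw [hcard] at hmem
  simp at hmem
end

section
/- Let {H_iα_i}_{i=1}^{s} be a coset partition of F_n (n ≥ 1) with indices 1 < d_1 ≤ … ≤ d_s, and let h_i be the period of the transition matrix A_i of H_i. If h_s = d_s (the period of A_s equals the largest index d_s), then the partition has multiplicity: there exists j ≠ s such that d_j = d_s. -/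
/-!
The period hypothesis forces the last subgroup `K = H_s` into the kernel of the homomorphism
`ψ : F_n → ℤ/d`, `d = d_s`, sending every generator to `1`. Indeed a positive word lying in `K`
is a closed path at the base vertex of the Schreier graph, so its length is divisible by the
period `d` (`schreierPeriod_dvd_length`); and every element of `F_n` is congruent to a positive
word modulo any normal subgroup of finite index (`exists_positive_word`), so it suffices to know
`ψ` on the positive words of `K` (`le_ker_lengthHom`).

Compose `ψ` with a faithful character of `ℤ/d` to get `χ : F_n → ℂ` of order `d > 1`, and sum `χ`
over a finite quotient through which `χ` and all cosets `H_j α_j` factor. The total is `0`; the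
coset `K α_s` contributes a nonzero multiple of `χ(α_s)`; and a coset `H_j α_j` contributes `0`
as soon as `χ` is nontrivial on `H_j`. Hence some `j ≠ s` satisfies `H_j ≤ ker ψ`
(`exists_ne_le_ker`), so `d = [F_n : ker ψ]` divides `d_j`, and `d_j = d` by maximality of `d`.
-/

attribute [local instance] Classical.propDecidable

/-- The element of the free group spelled by a list of generators (a positive word). -/
def listWord {n : ℕ} (w : List (Fin n)) : FreeGroup (Fin n) :=
  (w.map FreeGroup.of).prod

/-- A positive word `w` is a path of length `|w|` in the Schreier graph from `H` to `Hw`. -/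
lemma schreierMatrix_pow_pos_s3 {n : ℕ} (H : Subgroup (FreeGroup (Fin n))) [H.FiniteIndex]
    (w : List (Fin n)) :
    0 < (schreierMatrix H ^ w.length) (rcoset H 1) (rcoset H (listWord w)) := by
  induction w using List.reverseRecOn with
  | nil => simp [listWord]
  | append_singleton w i ih =>
    rw [List.length_append, List.length_singleton, pow_succ, Matrix.mul_apply]
    refine Finset.sum_pos' (fun _ _ => Nat.zero_le _) ⟨rcoset H (listWord w),
      Finset.mem_univ _, Nat.mul_pos ih ?_⟩
    have : Nonempty {k : Fin n // cosetMul H (FreeGroup.of k) (rcoset H (listWord w)) =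
        rcoset H (listWord (w ++ [i]))} := by
      refine ⟨i, ?_⟩
      simp [listWord, cosetMul, rcoset]
    exact Nat.card_pos

lemma schreierPeriod_dvd_length_s3 {n : ℕ} (H : Subgroup (FreeGroup (Fin n))) [H.FiniteIndex]
    (w : List (Fin n)) (hw : listWord w ∈ H) : schreierPeriod H ∣ w.length := by
  rcases Nat.eq_zero_or_pos w.length with h | h
  · simp [h]
  refine setGcd_dvd ⟨h, ?_⟩
  have e : rcoset H (listWord w) = rcoset H 1 := by
    refine Quotient.sound' ?_
    rw [QuotientGroup.rightRel_apply]
    simpa using hw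
  have := schreierMatrix_pow_pos_s3 H w
  rwa [e] at this

/-- Modulo a normal subgroup of finite index, every element of `F_n` is a positive word:
an inverse is a positive power in the finite quotient. -/
lemma exists_positive_word_s3 {n : ℕ} (L : Subgroup (FreeGroup (Fin n))) [L.Normal]
    [L.FiniteIndex] (g : FreeGroup (Fin n)) :
    ∃ w : List (Fin n), (listWord w : FreeGroup (Fin n) ⧸ L) = g := by
  induction g using FreeGroup.induction_on with
  | C1 => exact ⟨[], by simp [listWord]⟩
  | of x => exact ⟨[x], by simp [listWord]⟩
  | inv_of x _ =>
    refine ⟨List.replicate (L.index - 1) x, ?_⟩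
    have hpos : 0 < L.index := Nat.pos_of_ne_zero Subgroup.FiniteIndex.index_ne_zero
    have h : ((FreeGroup.of x ^ L.index : FreeGroup (Fin n)) : FreeGroup (Fin n) ⧸ L) = 1 :=
      (QuotientGroup.eq_one_iff _).2 (L.pow_index_mem _)
    rw [QuotientGroup.mk_inv, eq_inv_iff_mul_eq_one, ← h, ← QuotientGroup.mk_mul]
    congr 1
    simp only [listWord, List.map_replicate, List.prod_replicate]
    rw [← pow_succ, Nat.sub_add_cancel hpos]
  | mul x y hx hy =>
    obtain ⟨u, hu⟩ := hx
    obtain ⟨v, hv⟩ := hy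
    refine ⟨u ++ v, ?_⟩
    have : listWord (u ++ v) = listWord u * listWord v := by simp [listWord]
    rw [this, QuotientGroup.mk_mul, QuotientGroup.mk_mul, hu, hv]

/-- The homomorphism `F_n → ℤ/d` (written multiplicatively) sending every generator to `1`. -/
def lengthHom (n d : ℕ) : FreeGroup (Fin n) →* Multiplicative (ZMod d) :=
  FreeGroup.lift fun _ => Multiplicative.ofAdd 1

lemma lengthHom_listWord {n : ℕ} (d : ℕ) (w : List (Fin n)) :
    lengthHom n d (listWord w) = Multiplicative.ofAdd (w.length : ZMod d) := by
  induction w with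
  | nil => simp [listWord]
  | cons i w ih =>
    have : listWord (i :: w) = FreeGroup.of i * listWord w := by simp [listWord]
    rw [this, map_mul, ih, lengthHom, FreeGroup.lift_apply_of, ← ofAdd_add]
    push_cast [List.length_cons]
    rw [add_comm]

lemma index_ker_lengthHom {n : ℕ} (d : ℕ) [NeZero d] (hn : 1 ≤ n) :
    (lengthHom n d).ker.index = d := by
  have hs : Function.Surjective (lengthHom n d) := by
    intro y
    refine ⟨listWord (List.replicate (y.toAdd).val (⟨0, hn⟩ : Fin n)), ?_⟩
    rw [lengthHom_listWord]
    simp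
  rw [Subgroup.index_ker, MonoidHom.range_eq_top.2 hs, Subgroup.card_top]
  exact Nat.card_zmod d

lemma le_ker_lengthHom {n : ℕ} (d : ℕ) [NeZero d] (hn : 1 ≤ n)
    (K : Subgroup (FreeGroup (Fin n))) [K.FiniteIndex] (hK : schreierPeriod K = d) :
    K ≤ (lengthHom n d).ker := by
  intro g hg
  have : (lengthHom n d).ker.FiniteIndex :=
    ⟨by rw [index_ker_lengthHom d hn]; exact NeZero.ne d⟩
  obtain ⟨w, hw⟩ := exists_positive_word_s3 (K.normalCore ⊓ (lengthHom n d).ker) g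
  obtain ⟨h1, h2⟩ := QuotientGroup.eq.1 hw
  have hwK : listWord w ∈ K := by
    have := K.mul_mem hg (K.inv_mem (K.normalCore_le h1))
    simpa using this
  have hlen : d ∣ w.length := hK ▸ schreierPeriod_dvd_length_s3 K w hwK
  have hw0 : lengthHom n d (listWord w) = 1 := by
    rw [lengthHom_listWord, (ZMod.natCast_eq_zero_iff _ _).2 hlen, ofAdd_zero]
  have h3 : lengthHom n d ((listWord w)⁻¹ * g) = 1 := h2
  rw [map_mul, map_inv, hw0] at h3
  simpa using h3

/-- If a character `χ` of `G` is nontrivial, but trivial on the member `H k` of a coset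
partition, then it is trivial on another member: otherwise, summing `χ` over a finite quotient,
only the `k`-th coset contributes to a total which must vanish. -/
lemma exists_ne_le_ker {G ι : Type*} [Group G] [Fintype ι] (H : ι → Subgroup G) (α : ι → G)
    [∀ i, (H i).FiniteIndex] (hpart : IsCosetPartition H α) (χ : G →* ℂ)
    (k : ι) (hk : ∀ g ∈ H k, χ g = 1) (a : G) (ha : χ a ≠ 1) :
    ∃ j, j ≠ k ∧ ∀ g ∈ H j, χ g = 1 := by
  by_contra! hcon
  -- A normal subgroup of finite index contained in every `H i`.
  let N : Subgroup G := ⨅ i, (H i).normalCore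
  have : N.FiniteIndex := Subgroup.finiteIndex_iInf fun i => inferInstance
  have : N.Normal := Subgroup.normal_iInf_normal fun i => inferInstance
  have hN : ∀ i, N ≤ H i := fun i => (iInf_le _ i).trans (H i).normalCore_le
  have : Finite (G ⧸ N) := N.finite_quotient_of_finiteIndex
  let _ : Fintype (G ⧸ N) := Fintype.ofFinite _
  let χ' : G ⧸ N →* ℂ := QuotientGroup.lift N χ fun x hx => hk x (hN k hx)
  have hχ' : ∀ g : G, χ' (g : G ⧸ N) = χ g := fun g => rfl
  -- The image of the coset `H i α i` in the quotient.
  let S : ι → G ⧸ N → Prop := fun i q => q * ((α i : G) : G ⧸ N)⁻¹ ∈ (H i).map (QuotientGroup.mk' N)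
  have hS : ∀ i (g : G), S i (g : G ⧸ N) ↔ g ∈ rightCosetSet (H i) (α i) := by
    intro i g
    change ((g * (α i)⁻¹ : G) : G ⧸ N) ∈ (H i).map (QuotientGroup.mk' N) ↔ g * (α i)⁻¹ ∈ H i
    change g * (α i)⁻¹ ∈ ((H i).map (QuotientGroup.mk' N)).comap (QuotientGroup.mk' N) ↔ _
    rw [Subgroup.comap_map_eq, QuotientGroup.ker_mk', sup_eq_left.2 (hN i)]
  -- Translation by `h` multiplies by `χ h` the sum of `χ` over a set stable under it.
  have hzero : ∀ (P : G ⧸ N → Prop) (h : G), χ h ≠ 1 →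
      (∀ q, P ((h : G ⧸ N) * q) ↔ P q) → ∑ q, (if P q then χ' q else 0) = 0 := by
    intro P h hh hP
    have e : ∑ q, (if P q then χ' q else 0) = χ h * ∑ q, (if P q then χ' q else 0) := by
      rw [Finset.mul_sum, ← Equiv.sum_comp (Equiv.mulLeft (h : G ⧸ N))]
      refine Finset.sum_congr rfl fun q _ => ?_
      simp only [Equiv.coe_mulLeft, hP, map_mul, hχ', mul_ite, mul_zero]
    have e2 : (χ h - 1) * ∑ q, (if P q then χ' q else 0) = 0 := by
      rw [sub_mul, one_mul, ← e, sub_self]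
    exact (mul_eq_zero.1 e2).resolve_left (sub_ne_zero.2 hh)
  have htot : ∑ q, χ' q = 0 := by
    simpa using hzero (fun _ => True) a ha (by simp)
  have hother : ∀ j, j ≠ k → ∑ q, (if S j q then χ' q else 0) = 0 := by
    intro j hj
    obtain ⟨h, hh, hne⟩ := hcon j hj
    refine hzero (S j) h hne fun q => ?_
    have hm : (h : G ⧸ N) ∈ (H j).map (QuotientGroup.mk' N) := ⟨h, hh, rfl⟩
    simp only [S, mul_assoc]
    exact Subgroup.mul_mem_cancel_left _ hm
  have hsplit : ∑ q, χ' q = ∑ i, ∑ q, (if S i q then χ' q else 0) := by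
    rw [Finset.sum_comm]
    refine Finset.sum_congr rfl fun q _ => ?_
    obtain ⟨g, rfl⟩ := QuotientGroup.mk_surjective q
    obtain ⟨i, hi⟩ := hpart.1 g
    rw [Finset.sum_eq_single i, if_pos ((hS i g).2 hi)]
    · intro j _ hj
      rw [if_neg]
      exact fun h => Set.disjoint_left.1 (hpart.2 hj) ((hS j g).1 h) hi
    · simp
  rw [Finset.sum_eq_single k (fun j _ hj => hother j hj) (by simp), htot] at hsplit
  have hconst : ∀ q, (if S k q then χ' q else 0) = if S k q then χ (α k) else 0 := by
    intro q
    split_ifs with hq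
    · obtain ⟨g, rfl⟩ := QuotientGroup.mk_surjective q
      have hg := hk _ ((hS k g).1 hq)
      calc χ g = χ (g * (α k)⁻¹ * α k) := by simp
        _ = χ (α k) := by rw [map_mul, hg, one_mul]
    · rfl
  simp only [hconst] at hsplit
  rw [← Finset.sum_filter, Finset.sum_const, nsmul_eq_mul, eq_comm, mul_eq_zero] at hsplit
  rcases hsplit with h | h
  · rw [Nat.cast_eq_zero, Finset.card_eq_zero] at h
    have hmem : ((α k : G) : G ⧸ N) ∈ Finset.univ.filter (S k) :=
      Finset.mem_filter.2 ⟨Finset.mem_univ _, (hS k _).2 (by simp [rightCosetSet])⟩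
    rw [h] at hmem
    simp at hmem
  · have : χ (α k) * χ (α k)⁻¹ = 1 := by rw [← map_mul, mul_inv_cancel, map_one]
    rw [h, zero_mul] at this
    exact zero_ne_one this

/-- **Theorem.** If `{H_i α_i}` is a coset partition of `F_n` with indices `1 < d_1 ≤ … ≤ d_s`
(here indexed by `Fin (s+1)`, with last index `Fin.last s`), and the period of the transition
matrix of the last subgroup equals its index `d_s`, then the partition has multiplicity:
there is `j ≠ s` with `d_j = d_s`. -/
theorem multiplicity_of_period_eq_max_index (n s : ℕ) (hn : 1 ≤ n)
    (H : Fin (s + 1) → Subgroup (FreeGroup (Fin n))) (α : Fin (s + 1) → FreeGroup (Fin n))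
    [inst : ∀ i, (H i).FiniteIndex]
    (d : Fin (s + 1) → ℕ) (hindex : ∀ i, (H i).index = d i)
    (hd1 : ∀ i, 1 < d i) (hmono : Monotone d)
    (hpart : IsCosetPartition H α)
    (hper : schreierPeriod (H (Fin.last s)) = d (Fin.last s)) :
    ∃ j, j ≠ Fin.last s ∧ d j = d (Fin.last s) := by
  have : NeZero (d (Fin.last s)) := ⟨by have := hd1 (Fin.last s); omega⟩
  set m := d (Fin.last s) with hm
  let χ : FreeGroup (Fin n) →* ℂ := (ZMod.stdAddChar (N := m)).toMonoidHom.comp (lengthHom n m)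
  have hχ : ∀ g, χ g = 1 ↔ g ∈ (lengthHom n m).ker := by
    intro g
    change ZMod.stdAddChar (N := m) (lengthHom n m g).toAdd = 1 ↔ lengthHom n m g = 1
    rw [← AddChar.map_zero_eq_one (ZMod.stdAddChar (N := m)), ZMod.injective_stdAddChar.eq_iff]
    rfl
  have hK := le_ker_lengthHom m hn (H (Fin.last s)) hper
  have ha : χ (FreeGroup.of ⟨0, hn⟩) ≠ 1 := by
    rw [Ne, hχ, MonoidHom.mem_ker, lengthHom, FreeGroup.lift_apply_of]
    have : Fact (1 < m) := ⟨hd1 _⟩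
    exact fun h => one_ne_zero (α := ZMod m) (Multiplicative.ofAdd.injective h)
  obtain ⟨j, hj, hle⟩ := exists_ne_le_ker H α hpart χ (Fin.last s)
    (fun g hg => (hχ g).2 (hK hg)) _ ha
  refine ⟨j, hj, le_antisymm (hmono (Fin.le_last j)) ?_⟩
  have hdvd := Subgroup.index_dvd_of_le (fun g hg => (hχ g).1 (hle g hg) :
    H j ≤ (lengthHom n m).ker)
  rw [index_ker_lengthHom m hn, hindex] at hdvd
  exact Nat.le_of_dvd (by have := hd1 j; omega) hdvd
end

section
/- Let {d_iℤ + r_i}_{i=1}^{s} be a coset partition of ℤ with 1 < d_1 ≤ … ≤ d_s. Then the largest index d_s appears at least twice: there exists j ≠ s such that d_j = d_s (equivalently, d_{s−1} = d_s). -/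
/-!
The argument is a finite Fourier transform. Let `D` be the largest modulus, `ζ` a primitive
`D`-th root of unity and `N = ∏ d_i`. Summing `ζ ^ x` over `0 ≤ x < N`, split along the partition,
gives `0 = ∑_i S_i`, where `S_i` is the sum over the `x` in the `i`-th class. Shifting by `d_i`
(`sum_range_shift`) shows `S_i = ζ ^ d_i * S_i`, so `S_i = 0` whenever `d_i < D`
(`sum_class_eq_zero`). If `D` occurred only once, then the corresponding sum would vanish too; but
all its terms equal `ζ ^ r`, and there is at least one of them.
-/


attribute [local instance] Classical.propDecidable

theorem sum_range_shift (N : ℕ) (f : ℕ → ℂ) (hf : ∀ x, f (x + N) = f x) (k : ℕ) :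
    ∑ x ∈ Finset.range N, f (x + k) = ∑ x ∈ Finset.range N, f x := by
  induction k with
  | zero => simp
  | succ k ih =>
    have h1 := Finset.sum_range_succ (fun x => f (x + k)) N
    have h2 := Finset.sum_range_succ' (fun x => f (x + k)) N
    have h3 : f (N + k) = f (0 + k) := by rw [add_comm, hf, zero_add]
    simp only [h3] at h1
    rw [← ih]
    have h4 := add_right_cancel (h1.symm.trans h2)
    rw [h4]
    exact Finset.sum_congr rfl fun x _ => by congr 1; ring

/-- The sum of `ζ ^ x` over the elements of a class modulo `e` in a full period vanishes when
`ζ ^ e ≠ 1`. Taking `e = 1` gives the sum over all `x`. -/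
theorem sum_class_eq_zero (N e : ℕ) (r : ℤ) (ζ : ℂ) (heN : e ∣ N) (hN : ζ ^ N = 1)
    (he : ζ ^ e ≠ 1) :
    ∑ x ∈ Finset.range N, (if (e : ℤ) ∣ (x : ℤ) - r then ζ ^ x else 0) = 0 := by
  have key : ∀ m x : ℕ, e ∣ m →
      (if (e : ℤ) ∣ ((x + m : ℕ) : ℤ) - r then ζ ^ (x + m) else 0) =
        ζ ^ m * (if (e : ℤ) ∣ (x : ℤ) - r then ζ ^ x else 0) := by
    intro m x hm
    have hiff : (e : ℤ) ∣ ((x + m : ℕ) : ℤ) - r ↔ (e : ℤ) ∣ (x : ℤ) - r := by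
      have : ((x + m : ℕ) : ℤ) - r = ((x : ℤ) - r) + (m : ℤ) := by push_cast; ring
      rw [this]
      exact dvd_add_left (Int.natCast_dvd_natCast.mpr hm)
    by_cases h : (e : ℤ) ∣ (x : ℤ) - r
    · rw [if_pos h, if_pos (hiff.mpr h), pow_add, mul_comm]
    · rw [if_neg h, if_neg (fun h' => h (hiff.mp h')), mul_zero]
  have hshift := sum_range_shift N
    (fun x : ℕ => if (e : ℤ) ∣ (x : ℤ) - r then ζ ^ x else 0)
    (fun x => by rw [key N x heN, hN, one_mul]) e
  rw [Finset.sum_congr rfl fun x _ => key e x dvd_rfl, ← Finset.mul_sum] at hshift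
  by_contra hne
  exact he (mul_right_cancel₀ hne (hshift.trans (one_mul _).symm))

/-- **Theorem (Davenport–Rado / Mirsky–Newman).** In a coset partition
`{d_i ℤ + r_i}` of `ℤ` with `1 < d_1 ≤ … ≤ d_s` (here indexed by `Fin (s+1)`, with last index
`Fin.last s`), the largest index `d_s` appears at least twice. -/
theorem largest_index_repeats_int (s : ℕ)
    (d : Fin (s + 1) → ℕ) (r : Fin (s + 1) → ℤ)
    (hd1 : ∀ i, 1 < d i) (hmono : Monotone d)
    (hcover : ∀ x : ℤ, ∃ i, x ∈ residueClass (d i) (r i))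
    (hdisj : Pairwise fun i j => Disjoint (residueClass (d i) (r i)) (residueClass (d j) (r j))) :
    ∃ j, j ≠ Fin.last s ∧ d j = d (Fin.last s) := by
  by_contra hcon
  push Not at hcon
  set D := d (Fin.last s) with hD
  have hD1 : 1 < D := hd1 _
  obtain ⟨ζ, hζ⟩ : ∃ ζ : ℂ, IsPrimitiveRoot ζ D :=
    ⟨_, Complex.isPrimitiveRoot_exp D (by omega)⟩
  have hζ0 : ζ ≠ 0 := hζ.ne_zero (by omega)
  set N := ∏ i, d i with hNdef
  have hdN : ∀ i, d i ∣ N := fun i => Finset.dvd_prod_of_mem d (Finset.mem_univ i)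
  have hNpos : 0 < N := Finset.prod_pos fun i _ => by have := hd1 i; omega
  have hζN : ζ ^ N = 1 := (hζ.pow_eq_one_iff_dvd N).mpr (hdN _)
  have htotal : ∑ x ∈ Finset.range N, ζ ^ x = 0 := by
    have h := sum_class_eq_zero N 1 0 ζ (one_dvd N) hζN
      (by rw [pow_one]; exact hζ.ne_one hD1)
    simpa using h
  have hsplit : ∀ x : ℕ, ζ ^ x =
      ∑ i, (if (d i : ℤ) ∣ (x : ℤ) - r i then ζ ^ x else 0) := by
    intro x
    obtain ⟨i, hi⟩ := hcover x
    rw [Finset.sum_eq_single i]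
    · exact (if_pos hi).symm
    · intro j _ hji
      exact if_neg fun hj => Set.disjoint_left.mp (hdisj hji) hj hi
    · simp
  have hsmall : ∀ i, i ≠ Fin.last s →
      ∑ x ∈ Finset.range N, (if (d i : ℤ) ∣ (x : ℤ) - r i then ζ ^ x else 0) = 0 := by
    intro i hi
    have hlt : d i < D := lt_of_le_of_ne (hmono (Fin.le_last i)) (hcon i hi)
    have := hd1 i
    exact sum_class_eq_zero N (d i) (r i) ζ (hdN i) hζN
      (hζ.pow_ne_one_of_pos_of_lt (by omega) hlt)
  rw [Finset.sum_congr rfl fun x _ => hsplit x, Finset.sum_comm,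
    Finset.sum_eq_single (Fin.last s) (fun i _ hi => hsmall i hi) (by simp)] at htotal
  have hconst : ∀ x : ℕ, (D : ℤ) ∣ (x : ℤ) - r (Fin.last s) → ζ ^ x = ζ ^ r (Fin.last s) := by
    intro x hx
    have h1 := (hζ.zpow_eq_one_iff_dvd _).mpr hx
    rw [zpow_sub₀ hζ0, div_eq_one_iff_eq (zpow_ne_zero _ hζ0), zpow_natCast] at h1
    exact h1
  rw [← Finset.sum_filter, Finset.sum_congr rfl
    (fun x hx => hconst x (Finset.mem_filter.mp hx).2), Finset.sum_const, nsmul_eq_mul] at htotal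
  rcases mul_eq_zero.mp htotal with h | h
  · rw [Nat.cast_eq_zero, Finset.card_eq_zero] at h
    -- The least nonnegative residue of `r` modulo `D` lies in the class and is below `D ≤ N`.
    have hDpos : (0 : ℤ) < D := by omega
    have hnn := Int.emod_nonneg (r (Fin.last s)) hDpos.ne'
    have hlt := Int.emod_lt_of_pos (r (Fin.last s)) hDpos
    have hDN : D ≤ N := Nat.le_of_dvd hNpos (hdN _)
    have hmem : (r (Fin.last s) % D).toNat ∈ (∅ : Finset ℕ) := by
      rw [← h, Finset.mem_filter, Finset.mem_range]
      refine ⟨by omega, ?_⟩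
      rw [Int.toNat_of_nonneg hnn]
      exact (Int.mod_modEq _ _).symm.dvd
    simp at hmem
  · exact zpow_ne_zero _ hζ0 h
end

section
/- Let {d_iℤ + r_i}_{i=1}^{s} be a coset partition of ℤ with 1 < d_1 ≤ … ≤ d_s. If the index d_k does not properly divide any other index, i.e., for every 1 ≤ i ≤ s, if d_k divides d_i then d_i = d_k, then d_k appears at least twice: there exists j ≠ k such that d_j = d_k. -/
/-!
The proof is the classical root of unity argument. Let `n = d_k`, let `ζ` be a primitive `n`-th
root of unity and let `N = ∏ d_i`. The sum of `ζ ^ x` over a full period `0 ≤ x < N` vanishes, and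
the partition splits it into one sum for each class. Translation by `d_i` preserves the `i`-th class
and multiplies its sum by `ζ ^ d_i`, so that sum vanishes unless `n ∣ d_i`, which by hypothesis means
`d_i = n`. If `k` were the only such index, the sum over the `k`-th class would vanish as well; but
`ζ ^ x` is a nonzero constant on that class.
-/

attribute [local instance] Classical.propDecidable

/-- The sum of a periodic function over a full period is translation invariant. -/
lemma sum_range_add_of_periodic (N : ℕ) (f : ℕ → ℂ) (hf : ∀ x, f (x + N) = f x) (t : ℕ) :
    ∑ x ∈ Finset.range N, f (x + t) = ∑ x ∈ Finset.range N, f x := by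
  induction t with
  | zero => simp
  | succ t ih =>
    rw [← ih]
    have h1 := Finset.sum_range_succ (fun x => f (x + t)) N
    have h2 := Finset.sum_range_succ' (fun x => f (x + t)) N
    have h3 : f (N + t) = f (0 + t) := by rw [Nat.add_comm N t, hf, Nat.zero_add]
    have h4 : ∀ x, f (x + (t + 1)) = f (x + 1 + t) := fun x => by congr 1; omega
    simp only [h4]
    rw [h1, h3] at h2
    exact (add_right_cancel h2).symm

/-- The exponential sum of `ζ` over a residue class modulo `d` within a full period `N`
vanishes unless `ζ ^ d = 1`. -/
lemma sum_residueClass_eq_zero (N d : ℕ) (r : ℤ) (ζ : ℂ) (hN : ζ ^ N = 1) (hdN : d ∣ N)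
    (hd : ζ ^ d ≠ 1) :
    ∑ x ∈ Finset.range N, (if (d : ℤ) ∣ (x : ℤ) - r then ζ ^ x else 0) = 0 := by
  have key : ∀ m : ℕ, d ∣ m → ∀ x : ℕ,
      (if (d : ℤ) ∣ ((x + m : ℕ) : ℤ) - r then ζ ^ (x + m) else 0) =
        ζ ^ m * (if (d : ℤ) ∣ (x : ℤ) - r then ζ ^ x else 0) := by
    intro m hm x
    have h : (d : ℤ) ∣ ((x + m : ℕ) : ℤ) - r ↔ (d : ℤ) ∣ (x : ℤ) - r := by
      have e : ((x + m : ℕ) : ℤ) - r = ((x : ℤ) - r) + (m : ℤ) := by push_cast; ring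
      rw [e]
      exact dvd_add_left (Int.natCast_dvd_natCast.mpr hm)
    simp only [h, mul_ite, mul_zero, pow_add, mul_comm]
  have h := sum_range_add_of_periodic N
    (fun x : ℕ => if (d : ℤ) ∣ (x : ℤ) - r then ζ ^ x else 0)
    (fun x => by simpa only [hN, one_mul] using key N hdN x) d
  simp only [key d dvd_rfl, ← Finset.mul_sum] at h
  by_contra hS
  exact hd (mul_right_cancel₀ hS (by rw [h, one_mul]))

/-- **Theorem.** In a coset partition `{d_i ℤ + r_i}` of `ℤ` with `1 < d_1 ≤ … ≤ d_s`, any index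
`d_k` that does not properly divide any other index appears at least twice. -/
theorem nondividing_index_repeats_int (s : ℕ)
    (d : Fin s → ℕ) (r : Fin s → ℤ)
    (hd1 : ∀ i, 1 < d i) (hmono : Monotone d)
    (hcover : ∀ x : ℤ, ∃ i, x ∈ residueClass (d i) (r i))
    (hdisj : Pairwise fun i j => Disjoint (residueClass (d i) (r i)) (residueClass (d j) (r j)))
    (k : Fin s) (hnd : ∀ i, d k ∣ d i → d i = d k) :
    ∃ j, j ≠ k ∧ d j = d k := by
  by_contra! hne
  set n := d k with hn
  have hn0 : n ≠ 0 := by have := hd1 k; omega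
  obtain ⟨ζ, hζ⟩ : ∃ ζ : ℂ, IsPrimitiveRoot ζ n := ⟨_, Complex.isPrimitiveRoot_exp n hn0⟩
  set N := ∏ i, d i with hNdef
  have hdN : ∀ i, d i ∣ N := fun i => Finset.dvd_prod_of_mem d (Finset.mem_univ i)
  have hζN : ζ ^ N = 1 := (hζ.pow_eq_one_iff_dvd N).mpr (hdN k)
  have hN0 : 0 < N := Finset.prod_pos fun i _ => by have := hd1 i; omega
  -- The sum over all of `ℤ / N`, seen as the residue class modulo `1`.
  have htotal : ∑ x ∈ Finset.range N, ζ ^ x = 0 := by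
    simpa using sum_residueClass_eq_zero N 1 0 ζ hζN (one_dvd N)
      (by simpa using hζ.ne_one (hd1 k))
  have hsplit : ∀ x : ℕ,
      ∑ i, (if (d i : ℤ) ∣ (x : ℤ) - r i then ζ ^ x else 0) = ζ ^ x := by
    intro x
    obtain ⟨i, hi⟩ := hcover x
    have hi' : (d i : ℤ) ∣ (x : ℤ) - r i := hi
    rw [Finset.sum_eq_single i, if_pos hi']
    · intro j _ hj
      exact if_neg fun hx => Set.disjoint_left.mp (hdisj hj) hx hi
    · simp
  rw [Finset.sum_congr rfl fun x _ => (hsplit x).symm] at htotal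
  rw [Finset.sum_comm, Finset.sum_eq_single k] at htotal
  · -- On the `k`-th class `ζ ^ x` is constant, equal to its value at the representative `y`.
    set y := (r k % (n : ℤ)).toNat with hy
    have hyz : (y : ℤ) = r k % (n : ℤ) :=
      Int.toNat_of_nonneg (Int.emod_nonneg _ (by exact_mod_cast hn0))
    have hylt : y < n := by
      have := Int.emod_lt_of_pos (r k) (b := (n : ℤ)) (by omega)
      omega
    have hdy : (n : ℤ) ∣ (y : ℤ) - r k := by
      rw [hyz, Int.emod_def]
      exact ⟨-(r k / (n : ℤ)), by ring⟩
    have hconst : ∀ x : ℕ, (if (n : ℤ) ∣ (x : ℤ) - r k then ζ ^ x else 0) =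
        ζ ^ y * (if (n : ℤ) ∣ (x : ℤ) - r k then 1 else 0) := by
      intro x
      split_ifs with hx
      · have hxy : (n : ℤ) ∣ (y : ℤ) - (x : ℤ) := by simpa using dvd_sub hdy hx
        have hmod : x ≡ y [MOD n] := (Nat.modEq_iff_dvd).mpr hxy
        rw [mul_one, pow_eq_pow_mod x hζ.pow_eq_one, hmod, ← pow_eq_pow_mod y hζ.pow_eq_one]
      · simp
    rw [← hn] at htotal
    simp only [hconst, ← Finset.mul_sum, Finset.sum_boole] at htotal
    rcases mul_eq_zero.mp htotal with h | h
    · exact pow_ne_zero y (hζ.ne_zero hn0) h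
    · rw [Nat.cast_eq_zero, Finset.card_eq_zero] at h
      have hmem : y ∈ Finset.filter (fun x : ℕ => (n : ℤ) ∣ (x : ℤ) - r k) (Finset.range N) :=
        Finset.mem_filter.mpr
          ⟨Finset.mem_range.mpr (hylt.trans_le (Nat.le_of_dvd hN0 (hdN k))), hdy⟩
      rw [h] at hmem
      exact Finset.notMem_empty y hmem
  · intro i _ hi
    exact sum_residueClass_eq_zero N (d i) (r i) ζ hζN (hdN i)
      fun h => hne i hi (hnd i ((hζ.pow_eq_one_iff_dvd _).mp h))
  · simp
end

section
/- Let {d_iℤ + r_i}_{i=1}^{s} be a coset partition of ℤ with 1 < d_1 ≤ … ≤ d_s. Then each index divides another: for every 1 ≤ i ≤ s there exists j ≠ i such that d_i divides d_j. -/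
/-!
The proof is a Fourier argument on `ZMod N`, where `N = ∏ d_j`. Each residue class `d_j ℤ + r_j`
descends to a subset `C_j` of `ZMod N`, and these subsets partition `ZMod N`. Let `ψ` be the
character of `ZMod N` obtained by composing the reduction `ZMod N → ZMod (d i)` with a faithful
character of `ZMod (d i)`. Since `C_j` is invariant under translation by `d_j`, the sum of `ψ` over
`C_j` vanishes unless `ψ (d_j) = 1`, that is, unless `d_i ∣ d_j`. If `d_i` divided no other `d_j`,
then summing over the partition would equate the sum of `ψ` over `ZMod N`, which is zero because
`d_i > 1`, with its sum over `C_i`, where `ψ` is a nonzero constant and `C_i` is nonempty.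
-/

attribute [local instance] Classical.propDecidable

/-- **Theorem.** In a coset partition `{d_i ℤ + r_i}` of `ℤ` with `1 < d_1 ≤ … ≤ d_s`, each
index divides another: for every `i` there is `j ≠ i` with `d_i ∣ d_j`. -/
theorem index_divides_another_int (s : ℕ)
    (d : Fin s → ℕ) (r : Fin s → ℤ)
    (hd1 : ∀ i, 1 < d i) (hmono : Monotone d)
    (hcover : ∀ x : ℤ, ∃ i, x ∈ residueClass (d i) (r i))
    (hdisj : Pairwise fun i j => Disjoint (residueClass (d i) (r i)) (residueClass (d j) (r j))) :
    ∀ i, ∃ j, j ≠ i ∧ d i ∣ d j := by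
  intro i
  by_contra! hno
  set N : ℕ := ∏ j, d j with hN
  have hN0 : N ≠ 0 := Finset.prod_ne_zero_iff.mpr fun j _ => by have := hd1 j; omega
  have hdvd : ∀ j, d j ∣ N := fun j => Finset.dvd_prod_of_mem d (Finset.mem_univ j)
  have : NeZero N := ⟨hN0⟩
  have : NeZero (d i) := ⟨by have := hd1 i; omega⟩
  let π : (j : Fin s) → ZMod N →+* ZMod (d j) := fun j => ZMod.castHom (hdvd j) (ZMod (d j))
  have hmem : ∀ j (n : ℤ), π j (n : ZMod N) = (r j : ZMod (d j)) ↔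
      n ∈ residueClass (d j) (r j) := by
    intro j n
    rw [map_intCast, eq_comm, ZMod.intCast_eq_intCast_iff_dvd_sub]
    rfl
  let ψ : ZMod N → ℂ := fun x => ZMod.stdAddChar (π i x)
  have hψadd : ∀ x y, ψ (x + y) = ψ x * ψ y := by
    intro x y
    simp only [ψ, map_add, AddChar.map_add_eq_mul]
  have hψone : ∀ m : ℕ, ψ (m : ZMod N) = 1 → d i ∣ m := by
    intro m hm
    have h0 : (ZMod.stdAddChar ((m : ℕ) : ZMod (d i)) : ℂ) = ZMod.stdAddChar (0 : ZMod (d i)) := by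
      rw [AddChar.map_zero_eq_one]
      simpa only [ψ, map_natCast] using hm
    exact (ZMod.natCast_eq_zero_iff _ _).mp (ZMod.injective_stdAddChar h0)
  have hpart : ∀ x : ZMod N, ψ x = ∑ j, if π j x = (r j : ZMod (d j)) then ψ x else 0 := by
    intro x
    obtain ⟨n, rfl⟩ := ZMod.intCast_surjective x
    obtain ⟨j, hj⟩ := hcover n
    rw [Finset.sum_eq_single j, if_pos ((hmem j n).mpr hj)]
    · intro k _ hk
      exact if_neg fun h => Set.disjoint_left.mp (hdisj hk) ((hmem k n).mp h) hj
    · simp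
  have htotal : ∑ x, ψ x = 0 := by
    have h1 : ψ ((1 : ℕ) : ZMod N) ≠ 1 := fun h => by
      have := Nat.le_of_dvd one_pos (hψone 1 h)
      have := hd1 i
      omega
    have hshift : ∑ x, ψ x = (∑ x, ψ x) * ψ ((1 : ℕ) : ZMod N) := by
      rw [Finset.sum_mul, ← Equiv.sum_comp (Equiv.addRight ((1 : ℕ) : ZMod N))]
      exact Finset.sum_congr rfl fun x _ => hψadd x _
    by_contra h
    exact h1 (mul_left_cancel₀ h (by rw [← hshift, mul_one]))
  have hclass : ∀ j, j ≠ i → ∑ x, (if π j x = (r j : ZMod (d j)) then ψ x else 0) = 0 := by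
    intro j hj
    have h1 : ψ (d j : ZMod N) ≠ 1 := fun h => hno j hj (hψone _ h)
    have hshift : ∑ x, (if π j x = (r j : ZMod (d j)) then ψ x else 0) =
        (∑ x, (if π j x = (r j : ZMod (d j)) then ψ x else 0)) * ψ (d j : ZMod N) := by
      conv_lhs => rw [← Equiv.sum_comp (Equiv.addRight (d j : ZMod N))]
      rw [Finset.sum_mul]
      refine Finset.sum_congr rfl fun x _ => ?_
      rw [Equiv.coe_addRight, map_add, map_natCast, ZMod.natCast_self, add_zero, hψadd, ite_mul,
        zero_mul]
    by_contra h
    exact h1 (mul_left_cancel₀ h (by rw [← hshift, mul_one]))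
  have hown : ∑ x, (if π i x = (r i : ZMod (d i)) then ψ x else 0) = 0 := by
    rw [Finset.sum_congr rfl fun x _ => hpart x, Finset.sum_comm,
      Finset.sum_eq_single i (fun j _ hj => hclass j hj) (by simp)] at htotal
    exact htotal
  -- On its own class `ψ` is constant, so its sum there is the size of the class times a root of unity.
  have hconst : ∀ x : ZMod N, (if π i x = (r i : ZMod (d i)) then ψ x else 0) =
      if π i x = (r i : ZMod (d i)) then (ZMod.stdAddChar (r i : ZMod (d i)) : ℂ) else 0 := by
    intro x
    split_ifs with h
    · simp only [ψ, h]
    · rfl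
  rw [Finset.sum_congr rfl fun x _ => hconst x, ← Finset.sum_filter, Finset.sum_const,
    nsmul_eq_mul, mul_eq_zero, Nat.cast_eq_zero, Finset.card_eq_zero] at hown
  rcases hown with h | h
  · have hr : (r i : ZMod N) ∈ Finset.univ.filter fun x => π i x = (r i : ZMod (d i)) := by
      simp
    rw [h] at hr
    simp at hr
  · have hu := AddChar.map_add_eq_mul (ZMod.stdAddChar (N := d i)) (r i : ZMod (d i)) (-r i)
    rw [h, add_neg_cancel, AddChar.map_zero_eq_one, zero_mul] at hu
    exact one_ne_zero hu
end
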